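/- Let (A,Λ) be any associative form ring and n ≥ 3. Then for any two comaximal form ideals (I,Γ) and (J,Δ) of (A,Λ), i.e. such that I + J = A, one has the equality [EU(2n,I,Γ), EU(2n,J,Δ)] = EU(2n,(I,Γ)∘(J,Δ)). -/

import Mathlib

open Matrix
open scoped commutatorElement

/-- Bak's form ring data on a ring `A`: an involution `bar`, a central symmetry
`λ` with `λ λ̄ = 1`, and a form parameter `Λ`. -/
structure FormRingData (A : Type*) [Ring A] where
  bar : A →+ A
  bar_mul : ∀ a b : A, bar (a * b) = bar b * bar a
  bar_bar : ∀ a : A, bar (bar a) = a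
  lam : A
  lam_comm : ∀ a : A, lam * a = a * lam
  lam_bar : lam * bar lam = 1
  Lambda : AddSubgroup A
  lambdaMin_mem : ∀ c : A, c - lam * bar c ∈ Lambda
  lambdaMax_mem : ∀ x ∈ Lambda, x = -(lam * bar x)
  lambda_conj : ∀ (c : A), ∀ x ∈ Lambda, c * x * bar c ∈ Lambda

namespace FormRingData

variable {A : Type*} [Ring A]

/-- Integral powers of the symmetry `λ`; negative powers use `λ̄ = λ⁻¹`. -/
def lpow (D : FormRingData A) (k : ℤ) : A :=
  if 0 ≤ k then D.lam ^ k.toNat else (D.bar D.lam) ^ (-k).toNat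

end FormRingData

/-- The index set `Ω = {1,…,n,−n,…,−1}`, coded as `Fin n × Bool`
(second component `true` = positive index). -/
abbrev Idx (n : ℕ) := Fin n × Bool

namespace Idx

/-- The involution `i ↦ −i` on indices. -/
def neg {n : ℕ} (i : Idx n) : Idx n := (i.1, !i.2)

/-- The sign `ε(i) ∈ {±1}`. -/
def eps {n : ℕ} (i : Idx n) : ℤ := if i.2 then 1 else -1

theorem neg_ne {n : ℕ} (i : Idx n) : neg i ≠ i := by
  simp [neg, Prod.ext_iff]

theorem neg_injective {n : ℕ} : Function.Injective (neg (n := n)) := by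
  intro i j h
  simp only [neg, Prod.mk.injEq] at h
  refine Prod.ext h.1 ?_
  have h2 := h.2
  cases hi : i.2 <;> cases hj : j.2 <;> simp_all

theorem neg_neg {n : ℕ} (i : Idx n) : neg (neg i) = i := by
  simp [neg]

end Idx

/-- `GL(2n, A)`, realised as the units of the `Ω × Ω` matrix ring over `A`. -/
abbrev GLn (A : Type*) [Ring A] (n : ℕ) := (Matrix (Idx n) (Idx n) A)ˣ

section aux

theorem one_add_mul_one_sub {R : Type*} [Ring R] {X : R} (h : X * X = 0) :
    (1 + X) * (1 - X) = 1 := by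
  have hh : (1 + X) * (1 - X) = 1 - X * X := by noncomm_ring
  rw [hh, h, sub_zero]

theorem one_sub_mul_one_add {R : Type*} [Ring R] {X : R} (h : X * X = 0) :
    (1 - X) * (1 + X) = 1 := by
  have hh : (1 - X) * (1 + X) = 1 - X * X := by noncomm_ring
  rw [hh, h, sub_zero]

theorem stdBasisMatrix_neg' {A : Type*} [Ring A] {n : ℕ} (i j : Idx n) (c : A) :
    single i j (-c) = -single i j c := by
  refine eq_neg_of_add_eq_zero_left ?_
  rw [← Matrix.single_add]
  simp

end aux

namespace FormRingData

variable {A : Type*} [Ring A] {n : ℕ}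

/-- The off-diagonal part of a short root element. -/
def Xmat (D : FormRingData A) (i j : Idx n) (c : A) : Matrix (Idx n) (Idx n) A :=
  single i j c -
    single (Idx.neg j) (Idx.neg i) (D.lpow ((Idx.eps j - Idx.eps i) / 2) * D.bar c)

theorem Xmat_mul (D : FormRingData A) {i j : Idx n} (hij : i ≠ j) (c c' : A) :
    D.Xmat i j c * D.Xmat i j c' = 0 := by
  unfold Xmat
  rw [sub_mul, mul_sub, mul_sub,
    Matrix.single_mul_single_of_ne _ _ _ _ (Ne.symm hij),
    Matrix.single_mul_single_of_ne _ _ _ _ (Ne.symm (Idx.neg_ne j)),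
    Matrix.single_mul_single_of_ne _ _ _ _ (Idx.neg_ne i),
    Matrix.single_mul_single_of_ne _ _ _ _ (fun h => hij (Idx.neg_injective h))]
  simp

theorem Xmat_neg (D : FormRingData A) (i j : Idx n) (c : A) :
    D.Xmat i j (-c) = -D.Xmat i j c := by
  unfold Xmat
  rw [map_neg, mul_neg, stdBasisMatrix_neg', stdBasisMatrix_neg']
  abel

/-- The elementary short root unipotent `T_{ij}(c)`, for `i ≠ ±j`
(with junk value `1` when `i = j`). -/
def TS (D : FormRingData A) (i j : Idx n) (c : A) : GLn A n :=
  if h : i = j then 1 else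
    { val := 1 + D.Xmat i j c
      inv := 1 + D.Xmat i j (-c)
      val_inv := by
        rw [D.Xmat_neg, ← sub_eq_add_neg]
        exact one_add_mul_one_sub (D.Xmat_mul h c c)
      inv_val := by
        rw [D.Xmat_neg, ← sub_eq_add_neg]
        exact one_sub_mul_one_add (D.Xmat_mul h c c) }

/-- The elementary long root unipotent `T_{i,−i}(c)`. -/
def TL (D : FormRingData A) (i : Idx n) (c : A) : GLn A n where
  val := 1 + single i (Idx.neg i) c
  inv := 1 + single i (Idx.neg i) (-c)
  val_inv := by
    rw [stdBasisMatrix_neg', ← sub_eq_add_neg]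
    exact one_add_mul_one_sub (Matrix.single_mul_single_of_ne _ _ _ _ (Idx.neg_ne i) _)
  inv_val := by
    rw [stdBasisMatrix_neg', ← sub_eq_add_neg]
    exact one_sub_mul_one_add (Matrix.single_mul_single_of_ne _ _ _ _ (Idx.neg_ne i) _)

/-- The elementary unitary transvection `T_{ij}(c)` (long or short root type
according to whether `j = −i`). -/
def T (D : FormRingData A) (i j : Idx n) (c : A) : GLn A n :=
  if j = Idx.neg i then D.TL i c else D.TS i j c

/-- The elementary commutator `Y_{ij}(a,b) = [T_{ij}(a), T_{ji}(b)]`. -/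
def Y (D : FormRingData A) (i j : Idx n) (a b : A) : GLn A n :=
  ⁅D.T i j a, D.T j i b⁆

/-- The elementary conjugate `Z_{ij}(a,c) = T_{ji}(c) T_{ij}(a) T_{ji}(−c)`. -/
def Z (D : FormRingData A) (i j : Idx n) (a c : A) : GLn A n :=
  D.T j i c * D.T i j a * D.T j i (-c)

/-- The set of elementary unitary transvections of level `(I,Γ)`. -/
def transvGen (D : FormRingData A) (n : ℕ) (I Γ : AddSubgroup A) : Set (GLn A n) :=
  {x | ∃ i j : Idx n, i ≠ j ∧ i ≠ Idx.neg j ∧ ∃ c ∈ I, x = D.TS i j c} ∪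
    {x | ∃ i : Idx n, ∃ g ∈ Γ, x = D.TL i (D.lpow (-(Idx.eps i + 1) / 2) * g)}

/-- The unrelative elementary subgroup `FU(2n, I, Γ)`. -/
def FU (D : FormRingData A) (n : ℕ) (I Γ : AddSubgroup A) : Subgroup (GLn A n) :=
  Subgroup.closure (D.transvGen n I Γ)

/-- The absolute elementary unitary group `EU(2n, A, Λ)`. -/
def EUmax (D : FormRingData A) (n : ℕ) : Subgroup (GLn A n) :=
  D.FU n ⊤ D.Lambda

/-- The relative elementary subgroup `EU(2n, I, Γ)`: the normal closure of
`FU(2n, I, Γ)` in `EU(2n, A, Λ)`. -/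
def EU (D : FormRingData A) (n : ℕ) (I Γ : AddSubgroup A) : Subgroup (GLn A n) :=
  Subgroup.closure {x | ∃ g ∈ D.EUmax n, ∃ t ∈ D.transvGen n I Γ, x = g * t * g⁻¹}

/-- The additive subgroup generated by products `st`, `s ∈ S`, `t ∈ T`. -/
def mulSub (S T : AddSubgroup A) : AddSubgroup A :=
  AddSubgroup.closure {x | ∃ a ∈ S, ∃ b ∈ T, x = a * b}

/-- The symmetrised product `ST + TS` of two (additive subgroups underlying)
two-sided ideals. -/
def symI (S T : AddSubgroup A) : AddSubgroup A :=
  mulSub S T ⊔ mulSub T S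

/-- The minimal relative form parameter `Γ_min(K)` of level `K`. -/
def gammaMin (D : FormRingData A) (K : AddSubgroup A) : AddSubgroup A :=
  AddSubgroup.closure
    ({x | ∃ a ∈ K, x = a - D.lam * D.bar a} ∪
      {x | ∃ a ∈ K, ∃ c ∈ D.Lambda, x = a * c * D.bar a})

/-- The relative form parameter `ˢΓ = ⟨ b γ b̄ ∣ b ∈ S, γ ∈ Γ ⟩`. -/
def conjPar (D : FormRingData A) (S Γ : AddSubgroup A) : AddSubgroup A :=
  AddSubgroup.closure {x | ∃ b ∈ S, ∃ g ∈ Γ, x = b * g * D.bar b}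

/-- The relative form parameter of the symmetrised product
`(I,Γ)∘(J,Δ) = (IJ+JI, Γ_min(IJ+JI) + ᴶΓ + ᴵΔ)`. -/
def symG (D : FormRingData A) (I Γ J Δ : AddSubgroup A) : AddSubgroup A :=
  D.gammaMin (symI I J) ⊔ D.conjPar J Γ ⊔ D.conjPar I Δ

/-- The elementary subgroup `EU(2n, (I,Γ)∘(J,Δ))` of the symmetrised product. -/
def EUsym (D : FormRingData A) (n : ℕ) (I Γ J Δ : AddSubgroup A) : Subgroup (GLn A n) :=
  D.EU n (symI I J) (D.symG I Γ J Δ)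

/-- Position-dependent membership `a ∈ (I,Γ)` at position `(i,j)`:
`a ∈ I` for a short root position, `a ∈ λ^{−(ε(i)+1)/2}Γ` for a long one. -/
def pmem (D : FormRingData A) (I Γ : AddSubgroup A) {n : ℕ} (i j : Idx n) (a : A) : Prop :=
  if j = Idx.neg i then ∃ g ∈ Γ, a = D.lpow (-(Idx.eps i + 1) / 2) * g else a ∈ I

end FormRingData

/-- A form ideal `(I,Γ)` of the form ring `(A,Λ)`. -/
structure FormIdeal {A : Type*} [Ring A] (D : FormRingData A) where
  I : AddSubgroup A
  Gamma : AddSubgroup A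
  mul_mem_left : ∀ (c : A), ∀ x ∈ I, c * x ∈ I
  mul_mem_right : ∀ (c : A), ∀ x ∈ I, x * c ∈ I
  bar_mem : ∀ x ∈ I, D.bar x ∈ I
  gammaMin_le : D.gammaMin I ≤ Gamma
  gamma_le_I : Gamma ≤ I
  gamma_le_Lambda : Gamma ≤ D.Lambda
  gamma_conj : ∀ (c : A), ∀ x ∈ Gamma, c * x * D.bar c ∈ Gamma

/-! Let `P` be a subgroup normalized by `EU(2n, A, Λ)`. By comaximality `FU(2n, I, Γ)` and
`FU(2n, J, Δ)` together generate `EU(2n, A, Λ)`, so modulo their commutator each is already normal,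
and `[EU(2n, I, Γ), EU(2n, J, Δ)] ≤ P` only has to be tested on transvections. The commutator
formulas then show that `P` contains all these commutators if and only if it contains the
transvections of level `(I,Γ)∘(J,Δ)`. The one delicate case is a commutator at opposite positions,
which no single formula computes: there, writing `1 = u + v` with `u ∈ I` and `v ∈ J`, the
transvection from `I` is modulo `P` a product of transvections at positions that are not opposite
to the other factor. Taking for `P` either side of the claimed equality finishes the proof. -/

section Group

open Subgroup

variable {G : Type*} [Group G] {N : Subgroup G}

theorem commutatorElement_eq_of_mul_eq {x y z : G}
    (h : x * y = z * (y * x)) : ⁅x, y⁆ = z := by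
  rw [commutatorElement_def, h]
  group

theorem commutatorElement_mem_swap {x y : G} : ⁅x, y⁆ ∈ N ↔ ⁅y, x⁆ ∈ N := by
  rw [← commutatorElement_inv, inv_mem_iff]

/-- The centralizer of `y` modulo `N`, taken inside the normalizer of `N` so that it is a
subgroup even when `N` is not normal. -/
def centralizerMod (N : Subgroup G) (y : G) : Subgroup G where
  carrier := {x | x ∈ normalizer (N : Set G) ∧ ⁅x, y⁆ ∈ N}
  one_mem' := ⟨one_mem _, by simp⟩
  mul_mem' := by
    rintro a b ⟨ha, hay⟩ ⟨hb, hby⟩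
    refine ⟨mul_mem ha hb, ?_⟩
    rw [commutatorElement_mul_left_eq_conj_mul]
    exact mul_mem ((mem_normalizer_iff.1 ha _).1 hby) hay
  inv_mem' := by
    rintro a ⟨ha, hay⟩
    refine ⟨inv_mem ha, ?_⟩
    rw [commutatorElement_inv_left]
    exact (mem_normalizer_iff''.1 ha _).1 (commutatorElement_mem_swap.1 hay)

theorem le_centralizerMod {y : G} (hy : y ∈ normalizer (N : Set G)) : N ≤ centralizerMod N y :=
  fun x hx => ⟨le_normalizer hx, by
    rw [commutatorElement_def, mul_assoc, mul_assoc, ← mul_assoc y]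
    exact mul_mem hx ((mem_normalizer_iff.1 hy _).1 (inv_mem hx))⟩

theorem commutator_closure_le {s t : Set G} (hs : s ⊆ normalizer (N : Set G))
    (ht : t ⊆ normalizer (N : Set G)) (hst : ∀ x ∈ s, ∀ y ∈ t, ⁅x, y⁆ ∈ N) :
    ⁅closure s, closure t⁆ ≤ N := by
  have closure_left : ∀ y ∈ t, closure s ≤ centralizerMod N y := fun y hy =>
    (closure_le _).2 fun x hx => ⟨hs hx, hst x hx y hy⟩
  have closure_right : ∀ x ∈ closure s, closure t ≤ centralizerMod N x := fun x hx =>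
    (closure_le _).2 fun y hy => ⟨ht hy, commutatorElement_mem_swap.1 (closure_left y hy hx).2⟩
  exact commutator_le.2 fun x hx y hy => commutatorElement_mem_swap.1 (closure_right x hx hy).2

theorem commutator_sup_sup_le {H K : Subgroup G} (hH : H ≤ normalizer (N : Set G))
    (hK : K ≤ normalizer (N : Set G)) (hHK : ⁅H, K⁆ ≤ N) : ⁅H ⊔ N, K ⊔ N⁆ ≤ N := by
  rw [sup_eq_closure, sup_eq_closure]
  refine commutator_closure_le (Set.union_subset hH le_normalizer)
    (Set.union_subset hK le_normalizer) ?_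
  rintro x (hx | hx) y (hy | hy)
  · exact hHK (commutator_mem_commutator hx hy)
  · exact le_normalizer_iff_commutator_le_right.1 hH (commutator_mem_commutator hx hy)
  · exact le_normalizer_iff_commutator_le_left.1 hK (commutator_mem_commutator hx hy)
  · exact commutator_le_self N (commutator_mem_commutator hx hy)

theorem sup_le_normalizer_sup {H K : Subgroup G} (hH : H ≤ normalizer (N : Set G))
    (hK : K ≤ normalizer (N : Set G)) (hHK : ⁅H, K⁆ ≤ N) :
    H ⊔ K ≤ normalizer ((H ⊔ N : Subgroup G) : Set G) := by
  refine sup_le (le_sup_left.trans le_normalizer) (le_normalizer_iff_commutator_le_left.2 ?_)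
  exact (commutator_mono le_rfl le_sup_left).trans
    ((commutator_sup_sup_le hH hK hHK).trans le_sup_right)

/-- The subgroup generated by the conjugates of `s` under `S`: for `s ⊆ S` it is the normal
closure of `s` in `S`, as a subgroup of the ambient group. -/
def conjClosure (S : Subgroup G) (s : Set G) : Subgroup G :=
  closure {x | ∃ g ∈ S, ∃ u ∈ s, x = g * u * g⁻¹}

theorem subset_conjClosure (S : Subgroup G) (s : Set G) : s ⊆ conjClosure S s :=
  fun u hu => subset_closure ⟨1, one_mem S, u, hu, by simp⟩

theorem le_normalizer_conjClosure (S : Subgroup G) (s : Set G) :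
    S ≤ normalizer (conjClosure S s : Set G) := by
  refine le_normalizer_closure_iff.2 ?_
  rintro g hg _ ⟨h, hh, u, hu, rfl⟩
  exact subset_closure ⟨g * h, mul_mem hg hh, u, hu, by group⟩

theorem conjClosure_le_iff {S P : Subgroup G} {s : Set G} (hP : S ≤ normalizer (P : Set G)) :
    conjClosure S s ≤ P ↔ s ⊆ P := by
  refine ⟨(subset_conjClosure S s).trans, fun hs => (closure_le _).2 ?_⟩
  rintro _ ⟨g, hg, u, hu, rfl⟩
  exact (mem_normalizer_iff.1 (hP hg) u).1 (hs hu)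

theorem le_normalizer_commutator {S H K : Subgroup G} (hH : S ≤ normalizer (H : Set G))
    (hK : S ≤ normalizer (K : Set G)) : S ≤ normalizer ((⁅H, K⁆ : Subgroup G) : Set G) := by
  refine le_normalizer_closure_iff.2 ?_
  rintro g hg _ ⟨x, hx, y, hy, rfl⟩
  rw [conjugate_commutatorElement]
  exact commutator_mem_commutator ((mem_normalizer_iff.1 (hH hg) x).1 hx)
    ((mem_normalizer_iff.1 (hK hg) y).1 hy)

theorem commutator_conjClosure_le_iff {S : Subgroup G} {s t : Set G}
    (hS : closure s ⊔ closure t = S) (hN : S ≤ normalizer (N : Set G)) :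
    ⁅conjClosure S s, conjClosure S t⁆ ≤ N ↔ ∀ x ∈ s, ∀ y ∈ t, ⁅x, y⁆ ∈ N := by
  refine ⟨fun h x hx y hy => h (commutator_mem_commutator (subset_conjClosure S s hx)
    (subset_conjClosure S t hy)), fun hst => ?_⟩
  have hs : closure s ≤ normalizer (N : Set G) := le_sup_left.trans (hS.trans_le hN)
  have ht : closure t ≤ normalizer (N : Set G) := le_sup_right.trans (hS.trans_le hN)
  have closures : ⁅closure s, closure t⁆ ≤ N :=
    commutator_closure_le (subset_closure.trans hs) (subset_closure.trans ht) hst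
  have conj_s : conjClosure S s ≤ closure s ⊔ N := by
    refine (conjClosure_le_iff ?_).2 (subset_closure.trans (le_sup_left : _ ≤ closure s ⊔ N))
    exact hS ▸ sup_le_normalizer_sup hs ht closures
  have conj_t : conjClosure S t ≤ closure t ⊔ N := by
    refine (conjClosure_le_iff ?_).2 (subset_closure.trans (le_sup_left : _ ≤ closure t ⊔ N))
    rw [← hS, sup_comm]
    exact sup_le_normalizer_sup ht hs ((commutator_comm_le _ _).trans closures)
  exact (commutator_mono conj_s conj_t).trans (commutator_sup_sup_le hs ht closures)

end Group

section Ring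

variable {R : Type*} [Ring R]

theorem one_add_mul_one_add {X Y : R} (h : X * Y = 0) :
    (1 + X) * (1 + Y) = 1 + (X + Y) := by
  rw [mul_add, add_mul, add_mul, h]
  noncomm_ring

theorem one_add_mul_one_add_eq {X Y Z : R} (h : X * Y = Z + Y * X)
    (hZY : Z * Y = 0) (hZX : Z * X = 0) :
    (1 + X) * (1 + Y) = (1 + Z) * ((1 + Y) * (1 + X)) := by
  have expand : (1 + Z) * ((1 + Y) * (1 + X)) =
    1 + X + Y + (Z + Y * X) + Z * Y + Z * X + Z * Y * X := by noncomm_ring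
  rw [expand, hZY, hZX, ← h]
  noncomm_ring

theorem commutatorElement_eq_one_of_val_eq_one_add {x y : Rˣ} {X Y : R}
    (hx : (x : R) = 1 + X) (hy : (y : R) = 1 + Y) (hXY : X * Y = 0) (hYX : Y * X = 0) :
    ⁅x, y⁆ = 1 := by
  rw [commutatorElement_eq_one_iff_mul_comm]
  ext1
  rw [Units.val_mul, Units.val_mul, hx, hy, one_add_mul_one_add hXY, one_add_mul_one_add hYX,
    add_comm X]

end Ring

namespace Idx

variable {n : ℕ} {i j : Idx n}

theorem neg_eq_iff : neg i = j ↔ i = neg j :=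
  ⟨fun h => h ▸ (neg_neg i).symm, fun h => h ▸ neg_neg j⟩

theorem ne_neg_self (i : Idx n) : i ≠ neg i :=
  (neg_ne i).symm

theorem fst_eq_fst_iff : i.1 = j.1 ↔ i = j ∨ i = neg j := by
  rcases i with ⟨a, s⟩
  rcases j with ⟨b, t⟩
  cases s <;> cases t <;> simp [neg]

theorem fst_ne_fst_iff : i.1 ≠ j.1 ↔ i ≠ j ∧ i ≠ neg j := by
  rw [Ne, fst_eq_fst_iff, not_or]

theorem ne_of_fst_ne (h : i.1 ≠ j.1) : i ≠ j :=
  (fst_ne_fst_iff.1 h).1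

theorem exists_fst_ne (hn : 3 ≤ n) (i j : Idx n) : ∃ k : Idx n, k.1 ≠ i.1 ∧ k.1 ≠ j.1 := by
  obtain ⟨m, -, hm⟩ := Finset.exists_mem_notMem_of_card_lt_card
    (s := {i.1, j.1}) (t := Finset.univ)
    (Finset.card_le_two.trans_lt (by rw [Finset.card_univ, Fintype.card_fin]; omega))
  rw [Finset.mem_insert, Finset.mem_singleton, not_or] at hm
  exact ⟨(m, true), hm⟩

/-- The indicator of the positive indices. All exponents of `λ` in the elementary unitary
transvections are linear in it, see `half_eps_sub_eps` and `half_neg_eps_add_one`. -/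
def posInd (i : Idx n) : ℤ := if i.2 then 1 else 0

theorem posInd_neg (i : Idx n) : posInd (neg i) = 1 - posInd i := by
  rcases i with ⟨a, s⟩
  cases s <;> simp [posInd, neg]

theorem half_eps_sub_eps (i j : Idx n) : (eps j - eps i) / 2 = posInd j - posInd i := by
  rcases i with ⟨a, s⟩
  rcases j with ⟨b, t⟩
  cases s <;> cases t <;> simp [posInd, eps]

theorem half_neg_eps_add_one (i : Idx n) : -(eps i + 1) / 2 = -posInd i := by
  rcases i with ⟨a, s⟩
  cases s <;> simp [posInd, eps]

end Idx

namespace FormRingData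

variable {A : Type*} [Ring A] {n : ℕ} (D : FormRingData A)

section Symmetry

/-- The symmetry `λ` as a unit of `A`, with inverse `λ̄`. -/
def lamUnit : Aˣ where
  val := D.lam
  inv := D.bar D.lam
  val_inv := D.lam_bar
  inv_val := by rw [← D.lam_comm, D.lam_bar]

theorem lpow_eq_zpow (k : ℤ) : D.lpow k = ((D.lamUnit ^ k : Aˣ) : A) := by
  obtain ⟨m, rfl | rfl⟩ := k.eq_nat_or_neg
  · simp [lpow, lamUnit]
  · rcases m.eq_zero_or_pos with rfl | hm
    · simp [lpow]
    · simp [lpow, lamUnit, hm.ne', ← inv_pow]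

theorem lpow_zero : D.lpow 0 = 1 := by
  simp [lpow]

theorem lpow_one : D.lpow 1 = D.lam := by
  simp [lpow]

theorem lpow_mul_lpow (k l : ℤ) : D.lpow k * D.lpow l = D.lpow (k + l) := by
  simp only [lpow_eq_zpow, _root_.zpow_add, Units.val_mul]

theorem lpow_mul_lpow_mul (k l : ℤ) (x : A) :
    D.lpow k * (D.lpow l * x) = D.lpow (k + l) * x := by
  rw [← mul_assoc, lpow_mul_lpow]

theorem commute_lpow (a : A) (k : ℤ) : Commute a (D.lpow k) := by
  rw [lpow_eq_zpow]
  exact Commute.units_zpow_right (u := D.lamUnit) (D.lam_comm a).symm k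

theorem mul_lpow_mul (a : A) (k : ℤ) (x : A) : a * (D.lpow k * x) = D.lpow k * (a * x) :=
  (D.commute_lpow a k).left_comm x

theorem bar_one : D.bar 1 = 1 := by
  simpa [D.bar_bar] using (D.bar_mul (D.bar 1) 1).symm

theorem bar_lpow (k : ℤ) : D.bar (D.lpow k) = D.lpow (-k) := by
  have bar_lpow_one : D.bar (D.lpow 1) = D.lpow (-1) := by simp [lpow]
  have bar_lpow_neg_one : D.bar (D.lpow (-1)) = D.lpow 1 := by
    rw [← bar_lpow_one, D.bar_bar]
  induction k with
  | zero => simp [lpow_zero, bar_one]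
  | succ k ih =>
    rw [add_comm, ← lpow_mul_lpow, D.bar_mul, ih, bar_lpow_one, lpow_mul_lpow, neg_add_rev]
  | pred k ih =>
    rw [sub_eq_neg_add, ← lpow_mul_lpow, D.bar_mul, ih, bar_lpow_neg_one, lpow_mul_lpow,
      neg_add_rev, _root_.neg_neg, _root_.neg_neg]

theorem bar_of_mem_Lambda {g : A} (hg : g ∈ D.Lambda) : D.bar g = -(D.lpow (-1) * g) := by
  have h : D.lpow 1 * D.bar g = -g := by
    rw [lpow_one, eq_neg_iff_add_eq_zero, ← eq_neg_iff_add_eq_zero.1 (D.lambdaMax_mem g hg),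
      add_comm]
  rw [← mul_neg, ← h, lpow_mul_lpow_mul, neg_add_cancel, lpow_zero, one_mul]

end Symmetry

section Twist

/-- The coefficient map `c ↦ λ^{(ε(j) - ε(i))/2} c̄` in `T_{ij}(c) = T_{-j,-i}(-twist i j c)`. -/
def twist (i j : Idx n) : A →+ A :=
  (AddMonoidHom.mulLeft (D.lpow (Idx.posInd j - Idx.posInd i))).comp D.bar

/-- The scalar `λ^{-(ε(i) + 1)/2}` of the long root positions `(i, -i)`. -/
def longScale (i : Idx n) : A :=
  D.lpow (-Idx.posInd i)

theorem twist_apply (i j : Idx n) (c : A) :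
    D.twist i j c = D.lpow (Idx.posInd j - Idx.posInd i) * D.bar c :=
  rfl

theorem twist_twist (i j : Idx n) (c : A) :
    D.twist (Idx.neg j) (Idx.neg i) (D.twist i j c) = c := by
  simp only [twist_apply, D.bar_mul, bar_lpow, D.bar_bar, (D.commute_lpow c _).eq,
    lpow_mul_lpow_mul, Idx.posInd_neg, sub_sub_sub_cancel_left, add_neg_cancel, lpow_zero,
    one_mul]

theorem twist_mul (i j l : Idx n) (a b : A) :
    D.twist j l b * D.twist i j a = D.twist i l (a * b) := by
  simp only [twist_apply, mul_assoc, D.mul_lpow_mul (D.bar b), lpow_mul_lpow_mul, D.bar_mul,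
    sub_add_sub_cancel]

theorem twist_mul_longScale_mul (i j : Idx n) (a : A) {g : A} (hg : g ∈ D.Lambda) :
    D.twist i (Idx.neg j) (a * (D.longScale j * g)) =
      -(D.longScale j * g * D.twist i j a) := by
  simp only [twist_apply, longScale, D.bar_mul, bar_lpow, D.bar_of_mem_Lambda hg, neg_mul, mul_neg,
    mul_assoc, D.mul_lpow_mul g, lpow_mul_lpow_mul, Idx.posInd_neg]
  congr 3
  ring

theorem mul_longScale_mul_twist (i j : Idx n) (a g : A) :
    a * (D.longScale j * g) * D.twist i j a = D.longScale i * (a * g * D.bar a) := by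
  simp only [twist_apply, longScale, mul_assoc, D.mul_lpow_mul g, D.mul_lpow_mul a,
    lpow_mul_lpow_mul]
  congr 2
  ring

theorem longScale_mul_sub (i : Idx n) (c : A) :
    D.longScale i * (c - D.lam * D.bar c) =
      D.longScale i * c - D.twist i (Idx.neg i) (D.longScale i * c) := by
  simp only [twist_apply, longScale, mul_sub, ← lpow_one, lpow_mul_lpow_mul, D.bar_mul, bar_lpow,
    (D.commute_lpow (D.bar c) _).eq, Idx.posInd_neg]
  congr 3
  ring

end Twist

section Relations

variable {i j k l : Idx n}

theorem TS_val (hij : i ≠ j) (c : A) :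
    (D.TS i j c : Matrix (Idx n) (Idx n) A) =
      1 + (single i j c - single (Idx.neg j) (Idx.neg i) (D.twist i j c)) := by
  simp only [TS, dif_neg hij, Xmat, twist_apply, Idx.half_eps_sub_eps]

theorem TL_val (i : Idx n) (c : A) :
    (D.TL i c : Matrix (Idx n) (Idx n) A) = 1 + single i (Idx.neg i) c :=
  rfl

theorem TS_add (i j : Idx n) (a b : A) : D.TS i j (a + b) = D.TS i j a * D.TS i j b := by
  rcases eq_or_ne i j with rfl | hij
  · simp [TS]
  · ext1
    have add : D.Xmat i j (a + b) = D.Xmat i j a + D.Xmat i j b := by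
      simp only [Xmat, map_add, mul_add, single_add]
      abel
    simp only [TS, dif_neg hij, Units.val_mul, one_add_mul_one_add (D.Xmat_mul hij a b), add]

theorem TL_add (i : Idx n) (a b : A) : D.TL i (a + b) = D.TL i a * D.TL i b := by
  ext1
  rw [Units.val_mul, TL_val, TL_val, TL_val, single_add, one_add_mul_one_add]
  exact single_mul_single_of_ne _ _ _ _ (Idx.neg_ne i) _

theorem TS_eq_TS_neg (hij : i ≠ j) (c : A) :
    D.TS i j c = D.TS (Idx.neg j) (Idx.neg i) (-D.twist i j c) := by
  ext1
  rw [D.TS_val hij, D.TS_val (Idx.neg_injective.ne hij.symm), map_neg, twist_twist,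
    stdBasisMatrix_neg', stdBasisMatrix_neg', Idx.neg_neg, Idx.neg_neg]
  abel

theorem commutator_TS_TS (hij : i.1 ≠ j.1) (hjl : j.1 ≠ l.1) (hil : i.1 ≠ l.1) (a b : A) :
    ⁅D.TS i j a, D.TS j l b⁆ = D.TS i l (a * b) := by
  apply commutatorElement_eq_of_mul_eq
  ext1
  simp only [Units.val_mul, D.TS_val (Idx.ne_of_fst_ne hij), D.TS_val (Idx.ne_of_fst_ne hjl),
    D.TS_val (Idx.ne_of_fst_ne hil)]
  apply one_add_mul_one_add_eq <;>
    simp [sub_mul, mul_sub, D.twist_mul, Idx.neg_eq_iff, Idx.neg_neg,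
      Idx.fst_ne_fst_iff.1 hij, Idx.fst_ne_fst_iff.1 hij.symm, Idx.fst_ne_fst_iff.1 hjl.symm,
      Idx.fst_ne_fst_iff.1 hil, Idx.fst_ne_fst_iff.1 hil.symm, Idx.fst_ne_fst_iff.1 hjl,
      Idx.ne_neg_self]

theorem commutator_TS_TS_neg (hij : i.1 ≠ j.1) (a b : A) :
    ⁅D.TS i j a, D.TS j (Idx.neg i) b⁆ =
      D.TL i (a * b - D.twist i (Idx.neg i) (a * b)) := by
  apply commutatorElement_eq_of_mul_eq
  ext1
  rw [← D.twist_mul i j (Idx.neg i)]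
  simp only [Units.val_mul, D.TS_val (Idx.ne_of_fst_ne hij), TL_val, sub_eq_add_neg (a * b),
    D.TS_val (Idx.ne_of_fst_ne (j := Idx.neg i) hij.symm), single_add, stdBasisMatrix_neg']
  apply one_add_mul_one_add_eq <;>
    simp [sub_mul, mul_sub, add_mul, Idx.neg_eq_iff, Idx.neg_neg,
      Idx.fst_ne_fst_iff.1 hij, Idx.fst_ne_fst_iff.1 hij.symm, Idx.ne_neg_self]

theorem commutator_TS_TL (hij : i.1 ≠ j.1) (a : A) {g : A} (hg : g ∈ D.Lambda) :
    ⁅D.TS i j a, D.TL j (D.longScale j * g)⁆ =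
      D.TS i (Idx.neg j) (a * (D.longScale j * g)) *
        D.TL i (D.longScale i * (a * g * D.bar a)) := by
  apply commutatorElement_eq_of_mul_eq
  ext1
  simp only [Units.val_mul, D.TS_val (Idx.ne_of_fst_ne hij), TL_val,
    D.TS_val (Idx.ne_of_fst_ne (j := Idx.neg j) hij), D.twist_mul_longScale_mul i j a hg,
    ← D.mul_longScale_mul_twist i j, stdBasisMatrix_neg', Idx.neg_neg]
  simp only [mul_add, mul_one, add_mul, one_mul, sub_mul, mul_sub, mul_assoc, add_zero, sub_zero,
    sub_neg_eq_add, single_mul_single_same, single_mul_single_of_ne, ne_eq, not_false_eq_true,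
    Idx.fst_ne_fst_iff.1 hij, Idx.fst_ne_fst_iff.1 hij.symm, Idx.ne_neg_self, Idx.neg_eq_iff,
    Idx.neg_neg]
  abel

theorem commutator_TS_TS_eq_one (hij : i ≠ j) (hkl : k ≠ l) (hjk : j ≠ k)
    (hjl : j ≠ Idx.neg l) (hik : i ≠ Idx.neg k) (hil : i ≠ l) (a b : A) :
    ⁅D.TS i j a, D.TS k l b⁆ = 1 := by
  apply commutatorElement_eq_one_of_val_eq_one_add (D.TS_val hij a) (D.TS_val hkl b) <;>
    simp [sub_mul, mul_sub, Idx.neg_eq_iff, Idx.neg_neg, hjk, hjl, hik,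
      hil, hjk.symm, hil.symm, Idx.neg_eq_iff.not.1 hjl.symm, Idx.neg_eq_iff.not.1 hik.symm]

theorem commutator_TS_TL_eq_one (hij : i ≠ j) (hjk : j ≠ k) (hik : i ≠ Idx.neg k) (a b : A) :
    ⁅D.TS i j a, D.TL k b⁆ = 1 := by
  apply commutatorElement_eq_one_of_val_eq_one_add (D.TS_val hij a) (D.TL_val k b) <;>
    simp [sub_mul, mul_sub, Idx.neg_eq_iff, Idx.neg_neg, hjk, hik,
      hjk.symm, Idx.neg_eq_iff.not.1 hik.symm]

theorem commutator_TL_TL_eq_one (hik : i ≠ Idx.neg k) (a b : A) :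
    ⁅D.TL i a, D.TL k b⁆ = 1 := by
  apply commutatorElement_eq_one_of_val_eq_one_add (D.TL_val i a) (D.TL_val k b) <;>
    simp [Idx.neg_eq_iff, hik, Idx.neg_eq_iff.not.1 hik.symm]

end Relations

section Level

/-- The coefficients of the elements `T_{ij}(c)` of a subgroup of `GL(2n, A)`. -/
def shortLevel (P : Subgroup (GLn A n)) (i j : Idx n) : AddSubgroup A :=
  P.toAddSubgroup.comap (AddMonoidHom.mk' (fun c => Additive.ofMul (D.TS i j c)) (D.TS_add i j))

/-- The coefficients of the elements `T_{i,-i}(c)` of a subgroup of `GL(2n, A)`, divided by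
`longScale i` so that they are independent of the position for the elementary groups. -/
def longLevel (P : Subgroup (GLn A n)) (i : Idx n) : AddSubgroup A :=
  P.toAddSubgroup.comap ((AddMonoidHom.mk' (fun c => Additive.ofMul (D.TL i c)) (D.TL_add i)).comp
    (AddMonoidHom.mulLeft (D.longScale i)))

variable {D} {P : Subgroup (GLn A n)} {i j : Idx n} {I Γ : AddSubgroup A}

theorem mem_shortLevel {c : A} : c ∈ D.shortLevel P i j ↔ D.TS i j c ∈ P :=
  Iff.rfl

theorem mem_longLevel {g : A} : g ∈ D.longLevel P i ↔ D.TL i (D.longScale i * g) ∈ P :=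
  Iff.rfl

theorem TS_mem_transvGen (hij : i.1 ≠ j.1) {c : A} (hc : c ∈ I) :
    D.TS i j c ∈ D.transvGen n I Γ :=
  Or.inl ⟨i, j, (Idx.fst_ne_fst_iff.1 hij).1, (Idx.fst_ne_fst_iff.1 hij).2, c, hc, rfl⟩

theorem TL_mem_transvGen (i : Idx n) {g : A} (hg : g ∈ Γ) :
    D.TL i (D.longScale i * g) ∈ D.transvGen n I Γ :=
  Or.inr ⟨i, g, hg, by rw [longScale, Idx.half_neg_eps_add_one]⟩

theorem forall_mem_transvGen {p : GLn A n → Prop} :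
    (∀ x ∈ D.transvGen n I Γ, p x) ↔
      (∀ i j : Idx n, i.1 ≠ j.1 → ∀ c ∈ I, p (D.TS i j c)) ∧
        ∀ i : Idx n, ∀ g ∈ Γ, p (D.TL i (D.longScale i * g)) := by
  refine ⟨fun h => ⟨fun i j hij c hc => h _ (TS_mem_transvGen hij hc),
    fun i g hg => h _ (TL_mem_transvGen i hg)⟩, ?_⟩
  rintro ⟨short, long⟩ _ (⟨i, j, hij, hij', c, hc, rfl⟩ | ⟨i, g, hg, rfl⟩)
  · exact short i j (Idx.fst_ne_fst_iff.2 ⟨hij, hij'⟩) c hc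
  · rw [Idx.half_neg_eps_add_one]
    exact long i g hg

theorem transvGen_subset_iff : D.transvGen n I Γ ⊆ P ↔
    (∀ i j : Idx n, i.1 ≠ j.1 → I ≤ D.shortLevel P i j) ∧ ∀ i : Idx n, Γ ≤ D.longLevel P i :=
  forall_mem_transvGen (p := (· ∈ P))

end Level

section SymmetrisedProduct

variable {D} {S T : AddSubgroup A}

theorem mul_mem_symI {a b : A} (ha : a ∈ S) (hb : b ∈ T) : a * b ∈ symI S T :=
  AddSubgroup.mem_sup_left (AddSubgroup.subset_closure ⟨a, ha, b, hb, rfl⟩)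

theorem symI_comm (S T : AddSubgroup A) : symI S T = symI T S :=
  sup_comm _ _

theorem mul_mem_symI_swap {a b : A} (ha : a ∈ S) (hb : b ∈ T) : b * a ∈ symI S T :=
  symI_comm T S ▸ mul_mem_symI hb ha

theorem symI_eq_closure (S T : AddSubgroup A) : symI S T = AddSubgroup.closure
    ({x | ∃ a ∈ S, ∃ b ∈ T, x = a * b} ∪ {x | ∃ b ∈ T, ∃ a ∈ S, x = b * a}) :=
  (AddSubgroup.closure_union _ _).symm

theorem symI_le {K : AddSubgroup A} (mul : ∀ a ∈ S, ∀ b ∈ T, a * b ∈ K)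
    (mul_swap : ∀ a ∈ S, ∀ b ∈ T, b * a ∈ K) : symI S T ≤ K := by
  rw [symI_eq_closure, AddSubgroup.closure_le]
  rintro _ (⟨a, ha, b, hb, rfl⟩ | ⟨b, hb, a, ha, rfl⟩)
  · exact mul a ha b hb
  · exact mul_swap a ha b hb

theorem symG_comm (S Γ T Δ : AddSubgroup A) : D.symG S Γ T Δ = D.symG T Δ S Γ := by
  rw [symG, symG, symI_comm S T, sup_right_comm]

theorem conj_add (a b : A) {c : A} (hc : c ∈ D.Lambda) :
    (a + b) * c * D.bar (a + b) = a * c * D.bar a + b * c * D.bar b +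
      (a * c * D.bar b - D.lam * D.bar (a * c * D.bar b)) := by
  have cross : D.lam * D.bar (a * c * D.bar b) = -(b * c * D.bar a) := by
    simp only [D.bar_mul, D.bar_bar, D.bar_of_mem_Lambda hc, ← lpow_one, neg_mul, mul_neg,
      mul_assoc, D.mul_lpow_mul b, lpow_mul_lpow_mul, add_neg_cancel, lpow_zero, one_mul]
  rw [cross, map_add]
  noncomm_ring

theorem eq_conj_add_of_add_eq_one {u v : A} (huv : u + v = 1) {c : A} (hc : c ∈ D.Lambda) :
    c = u * c * D.bar u + v * c * D.bar v +
      (u * c * D.bar v - D.lam * D.bar (u * c * D.bar v)) := by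
  rw [← conj_add u v hc, huv, bar_one, one_mul, mul_one]

theorem conj_mem_of_mem_closure {s : Set A} {K : AddSubgroup A} {c : A} (hc : c ∈ D.Lambda)
    (conj_mem : ∀ x ∈ s, x * c * D.bar x ∈ K)
    (cross_mem : ∀ x ∈ AddSubgroup.closure s, ∀ y,
      x * c * D.bar y - D.lam * D.bar (x * c * D.bar y) ∈ K)
    {a : A} (ha : a ∈ AddSubgroup.closure s) : a * c * D.bar a ∈ K := by
  induction ha using AddSubgroup.closure_induction with
  | mem x hx => exact conj_mem x hx
  | zero => simp
  | add x y hx hy ihx ihy =>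
    rw [conj_add x y hc]
    exact add_mem (add_mem ihx ihy) (cross_mem x hx y)
  | neg x hx ih => simpa using ih

end SymmetrisedProduct

end FormRingData

namespace FormIdeal

open FormRingData

variable {A : Type*} [Ring A] {D : FormRingData A} {n : ℕ}

section SymmetrisedProduct

theorem sub_mem_Gamma (F : FormIdeal D) {a : A} (ha : a ∈ F.I) :
    a - D.lam * D.bar a ∈ F.Gamma :=
  F.gammaMin_le (AddSubgroup.subset_closure (Or.inl ⟨a, ha, rfl⟩))

theorem conj_mem_Gamma (F : FormIdeal D) {a c : A} (ha : a ∈ F.I) (hc : c ∈ D.Lambda) :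
    a * c * D.bar a ∈ F.Gamma :=
  F.gammaMin_le (AddSubgroup.subset_closure (Or.inr ⟨a, ha, c, hc, rfl⟩))

theorem twist_mem (F : FormIdeal D) (i j : Idx n) {a : A} (ha : a ∈ F.I) :
    D.twist i j a ∈ F.I :=
  F.mul_mem_left _ _ (F.bar_mem a ha)

theorem mul_mem_right_symI (FI FJ : FormIdeal D) (c : A) {x : A} (hx : x ∈ symI FI.I FJ.I) :
    x * c ∈ symI FI.I FJ.I := by
  suffices symI FI.I FJ.I ≤ (symI FI.I FJ.I).comap (AddMonoidHom.mulRight c) from this hx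
  refine symI_le (fun a ha b hb => ?_) fun a ha b hb => ?_
  · simpa [mul_assoc] using mul_mem_symI ha (FJ.mul_mem_right c b hb)
  · simpa [mul_assoc] using mul_mem_symI_swap (FI.mul_mem_right c a ha) hb

theorem bar_mem_symI (FI FJ : FormIdeal D) {x : A} (hx : x ∈ symI FI.I FJ.I) :
    D.bar x ∈ symI FI.I FJ.I := by
  suffices symI FI.I FJ.I ≤ (symI FI.I FJ.I).comap D.bar from this hx
  refine symI_le (fun a ha b hb => ?_) fun a ha b hb => ?_
  · simpa [D.bar_mul] using mul_mem_symI_swap (FI.bar_mem a ha) (FJ.bar_mem b hb)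
  · simpa [D.bar_mul] using mul_mem_symI (FI.bar_mem a ha) (FJ.bar_mem b hb)

theorem mul_mem_left_symI (FI FJ : FormIdeal D) (c : A) {x : A} (hx : x ∈ symI FI.I FJ.I) :
    c * x ∈ symI FI.I FJ.I := by
  simpa [D.bar_mul, D.bar_bar] using
    bar_mem_symI FI FJ (mul_mem_right_symI FI FJ (D.bar c) (bar_mem_symI FI FJ hx))

theorem symG_le (FI FJ : FormIdeal D) {K : AddSubgroup A}
    (sub_mem : ∀ x ∈ symI FI.I FJ.I, x - D.lam * D.bar x ∈ K)
    (conj_left : ∀ b ∈ FJ.I, ∀ g ∈ FI.Gamma, b * g * D.bar b ∈ K)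
    (conj_right : ∀ a ∈ FI.I, ∀ g ∈ FJ.Gamma, a * g * D.bar a ∈ K) :
    D.symG FI.I FI.Gamma FJ.I FJ.Gamma ≤ K := by
  refine sup_le (sup_le ((AddSubgroup.closure_le _).2 (Set.union_subset ?_ ?_))
    ((AddSubgroup.closure_le _).2 ?_)) ((AddSubgroup.closure_le _).2 ?_)
  · rintro _ ⟨x, hx, rfl⟩
    exact sub_mem x hx
  · rintro _ ⟨x, hx, c, hc, rfl⟩
    have conj_mul (a b : A) : a * b * c * D.bar (a * b) = a * (b * c * D.bar b) * D.bar a := by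
      simp only [D.bar_mul, mul_assoc]
    rw [symI_eq_closure] at hx
    refine conj_mem_of_mem_closure hc ?_ (fun x hx y => sub_mem _ ?_) hx
    · rintro _ (⟨a, ha, b, hb, rfl⟩ | ⟨b, hb, a, ha, rfl⟩)
      · exact conj_mul a b ▸ conj_right a ha _ (FJ.conj_mem_Gamma hb hc)
      · exact conj_mul b a ▸ conj_left b hb _ (FI.conj_mem_Gamma ha hc)
    · rw [← symI_eq_closure] at hx
      exact mul_mem_right_symI FI FJ _ (mul_mem_right_symI FI FJ _ hx)
  · rintro _ ⟨b, hb, g, hg, rfl⟩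
    exact conj_left b hb g hg
  · rintro _ ⟨a, ha, g, hg, rfl⟩
    exact conj_right a ha g hg

theorem conj_mem_symG_right (FI FJ : FormIdeal D) {a g : A} (ha : a ∈ FI.I) (hg : g ∈ FJ.Gamma) :
    a * g * D.bar a ∈ D.symG FI.I FI.Gamma FJ.I FJ.Gamma :=
  AddSubgroup.mem_sup_right (AddSubgroup.subset_closure ⟨a, ha, g, hg, rfl⟩)

theorem conj_mem_symG_left (FI FJ : FormIdeal D) {b g : A} (hb : b ∈ FJ.I) (hg : g ∈ FI.Gamma) :
    b * g * D.bar b ∈ D.symG FI.I FI.Gamma FJ.I FJ.Gamma :=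
  symG_comm FJ.I _ _ _ ▸ conj_mem_symG_right FJ FI hb hg

theorem sub_mem_symG (FI FJ : FormIdeal D) {x : A} (hx : x ∈ symI FI.I FJ.I) :
    x - D.lam * D.bar x ∈ D.symG FI.I FI.Gamma FJ.I FJ.Gamma :=
  AddSubgroup.mem_sup_left (AddSubgroup.mem_sup_left
    (AddSubgroup.subset_closure (Or.inl ⟨x, hx, rfl⟩)))

theorem conj_mem_symG (FI FJ : FormIdeal D) (c : A) {x : A}
    (hx : x ∈ D.symG FI.I FI.Gamma FJ.I FJ.Gamma) :
    c * x * D.bar c ∈ D.symG FI.I FI.Gamma FJ.I FJ.Gamma := by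
  suffices D.symG FI.I FI.Gamma FJ.I FJ.Gamma ≤ (D.symG FI.I FI.Gamma FJ.I FJ.Gamma).comap
      ((AddMonoidHom.mulRight (D.bar c)).comp (AddMonoidHom.mulLeft c)) from this hx
  refine symG_le FI FJ (fun x hx => ?_) (fun b hb g hg => ?_) fun a ha g hg => ?_
  · have conj_sub : c * (x - D.lam * D.bar x) * D.bar c =
        c * x * D.bar c - D.lam * D.bar (c * x * D.bar c) := by
      simp only [D.bar_mul, D.bar_bar, mul_sub, sub_mul, ← lpow_one, D.mul_lpow_mul c, mul_assoc]
    change c * (x - D.lam * D.bar x) * D.bar c ∈ D.symG FI.I FI.Gamma FJ.I FJ.Gamma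
    exact conj_sub ▸ sub_mem_symG FI FJ
      (mul_mem_right_symI FI FJ _ (mul_mem_left_symI FI FJ c hx))
  · simpa [D.bar_mul, mul_assoc] using conj_mem_symG_left FI FJ (FJ.mul_mem_left c b hb) hg
  · simpa [D.bar_mul, mul_assoc] using conj_mem_symG_right FI FJ (FI.mul_mem_left c a ha) hg

/-- The symmetrised product `(I,Γ)∘(J,Δ)` as a form ideal. -/
def symmProd (FI FJ : FormIdeal D) : FormIdeal D where
  I := symI FI.I FJ.I
  Gamma := D.symG FI.I FI.Gamma FJ.I FJ.Gamma
  mul_mem_left c _ hx := mul_mem_left_symI FI FJ c hx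
  mul_mem_right c _ hx := mul_mem_right_symI FI FJ c hx
  bar_mem _ hx := bar_mem_symI FI FJ hx
  gammaMin_le := le_sup_left.trans le_sup_left
  gamma_le_I := symG_le FI FJ
    (fun _ hx => sub_mem hx (mul_mem_left_symI FI FJ _ (bar_mem_symI FI FJ hx)))
    (fun _ hb _ hg => mul_mem_right_symI FI FJ _ (mul_mem_symI_swap (FI.gamma_le_I hg) hb))
    fun _ ha _ hg => mul_mem_right_symI FI FJ _ (mul_mem_symI ha (FJ.gamma_le_I hg))
  gamma_le_Lambda := symG_le FI FJ (fun x _ => D.lambdaMin_mem x)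
    (fun b _ _ hg => D.lambda_conj b _ (FI.gamma_le_Lambda hg))
    fun a _ _ hg => D.lambda_conj a _ (FJ.gamma_le_Lambda hg)
  gamma_conj c _ hx := conj_mem_symG FI FJ c hx

end SymmetrisedProduct

/-- The generators of `FU(2n, I, Γ)`. -/
abbrev transv (F : FormIdeal D) (n : ℕ) : Set (GLn A n) :=
  D.transvGen n F.I F.Gamma

variable {FI FJ : FormIdeal D} {P : Subgroup (GLn A n)} {i j k l : Idx n} {a b : A}

theorem transv_subset_EUmax (F : FormIdeal D) (n : ℕ) : F.transv n ⊆ D.EUmax n :=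
  forall_mem_transvGen.2 ⟨fun _ _ hij _ _ => Subgroup.subset_closure
    (TS_mem_transvGen hij (AddSubgroup.mem_top _)),
    fun i _ hg => Subgroup.subset_closure (TL_mem_transvGen i (F.gamma_le_Lambda hg))⟩

theorem transv_symmProd_comm (FI FJ : FormIdeal D) (n : ℕ) :
    (FI.symmProd FJ).transv n = (FJ.symmProd FI).transv n :=
  congrArg₂ (D.transvGen n) (symI_comm FI.I FJ.I) (symG_comm FI.I FI.Gamma FJ.I FJ.Gamma)

section LowerBound

theorem mul_mem_shortLevel (hn : 3 ≤ n)
    (hP : ∀ x ∈ FI.transv n, ∀ y ∈ FJ.transv n, ⁅x, y⁆ ∈ P) (hij : i.1 ≠ j.1)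
    (ha : a ∈ FI.I) (hb : b ∈ FJ.I) : a * b ∈ D.shortLevel P i j := by
  obtain ⟨k, hki, hkj⟩ := Idx.exists_fst_ne hn i j
  rw [mem_shortLevel, ← D.commutator_TS_TS hki.symm hkj hij]
  exact hP _ (TS_mem_transvGen hki.symm ha) _ (TS_mem_transvGen hkj hb)

theorem mul_sub_mem_longLevel (hn : 3 ≤ n)
    (hP : ∀ x ∈ FI.transv n, ∀ y ∈ FJ.transv n, ⁅x, y⁆ ∈ P) (i : Idx n)
    (ha : a ∈ FI.I) (hb : b ∈ FJ.I) : a * b - D.lam * D.bar (a * b) ∈ D.longLevel P i := by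
  obtain ⟨j, hji, -⟩ := Idx.exists_fst_ne hn i i
  rw [mem_longLevel, longScale_mul_sub, ← mul_assoc, ← D.commutator_TS_TS_neg hji.symm]
  exact hP _ (TS_mem_transvGen hji.symm (FI.mul_mem_left _ a ha)) _
    (TS_mem_transvGen (j := Idx.neg i) hji hb)

theorem conj_mem_longLevel (hn : 3 ≤ n)
    (hP : ∀ x ∈ FI.transv n, ∀ y ∈ FJ.transv n, ⁅x, y⁆ ∈ P) (i : Idx n) {g : A}
    (ha : a ∈ FI.I) (hg : g ∈ FJ.Gamma) : a * g * D.bar a ∈ D.longLevel P i := by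
  obtain ⟨j, hji, -⟩ := Idx.exists_fst_ne hn i i
  have commutator_mem := hP _ (TS_mem_transvGen hji.symm ha) _ (TL_mem_transvGen j hg)
  rw [D.commutator_TS_TL hji.symm a (FJ.gamma_le_Lambda hg)] at commutator_mem
  exact (P.mul_mem_cancel_left (mul_mem_shortLevel hn hP (j := Idx.neg j) hji.symm ha
    (FJ.mul_mem_left _ g (FJ.gamma_le_I hg)))).1 commutator_mem

theorem transv_symmProd_subset (hn : 3 ≤ n)
    (hP : ∀ x ∈ FI.transv n, ∀ y ∈ FJ.transv n, ⁅x, y⁆ ∈ P) :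
    (FI.symmProd FJ).transv n ⊆ P := by
  have hP' : ∀ y ∈ FJ.transv n, ∀ x ∈ FI.transv n, ⁅y, x⁆ ∈ P :=
    fun y hy x hx => commutatorElement_mem_swap.1 (hP x hx y hy)
  refine transvGen_subset_iff.2 ⟨fun i j hij => symI_le
    (fun a ha b hb => mul_mem_shortLevel hn hP hij ha hb)
    (fun a ha b hb => mul_mem_shortLevel hn hP' hij hb ha), fun i => symG_le FI FJ ?_
    (fun b hb g hg => conj_mem_longLevel hn hP' i hb hg)
    fun a ha g hg => conj_mem_longLevel hn hP i ha hg⟩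
  suffices symI FI.I FJ.I ≤ (D.longLevel P i).comap
    (AddMonoidHom.id A - (AddMonoidHom.mulLeft D.lam).comp D.bar) from this
  exact symI_le (fun a ha b hb => mul_sub_mem_longLevel hn hP i ha hb)
    fun a ha b hb => mul_sub_mem_longLevel hn hP' i hb ha

end LowerBound

section UpperBound

theorem TL_sub_twist_mem_transv (F : FormIdeal D) (i : Idx n) (ha : a ∈ F.I) :
    D.TL i (a - D.twist i (Idx.neg i) a) ∈ F.transv n := by
  have rescale : D.longScale i * (D.lpow (Idx.posInd i) * a) = a := by
    rw [longScale, lpow_mul_lpow_mul, neg_add_cancel, lpow_zero, one_mul]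
  rw [← rescale, ← longScale_mul_sub]
  exact TL_mem_transvGen i (F.sub_mem_Gamma (F.mul_mem_left _ a ha))

theorem commutator_TS_TS_mem_of_ne (hP : (FI.symmProd FJ).transv n ⊆ P) (hij : i.1 ≠ j.1)
    (hjl : j.1 ≠ l.1) (hil : i ≠ l) (ha : a ∈ FI.I) (hb : b ∈ FJ.I) :
    ⁅D.TS i j a, D.TS j l b⁆ ∈ P := by
  have hab : a * b ∈ (FI.symmProd FJ).I := mul_mem_symI ha hb
  by_cases hil' : i.1 = l.1
  · obtain rfl : l = Idx.neg i := (Idx.fst_eq_fst_iff.1 hil'.symm).resolve_left hil.symm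
    rw [D.commutator_TS_TS_neg hij]
    exact hP (TL_sub_twist_mem_transv _ i hab)
  · rw [D.commutator_TS_TS hij hjl hil']
    exact hP (TS_mem_transvGen hil' hab)

theorem commutator_TS_TL_mem_of_adjacent (hP : (FI.symmProd FJ).transv n ⊆ P) (hij : i.1 ≠ j.1)
    {g : A} (ha : a ∈ FI.I) (hg : g ∈ FJ.Gamma) :
    ⁅D.TS i j a, D.TL j (D.longScale j * g)⁆ ∈ P := by
  rw [D.commutator_TS_TL hij a (FJ.gamma_le_Lambda hg)]
  exact mul_mem
    (hP (TS_mem_transvGen (j := Idx.neg j) hij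
      (mul_mem_symI ha (FJ.mul_mem_left _ g (FJ.gamma_le_I hg)))))
    (hP (TL_mem_transvGen i (conj_mem_symG_right FI FJ ha hg)))

theorem commutator_TS_TL_mem (hP : (FI.symmProd FJ).transv n ⊆ P) (hij : i.1 ≠ j.1) (k : Idx n)
    {g : A} (ha : a ∈ FI.I) (hg : g ∈ FJ.Gamma) :
    ⁅D.TS i j a, D.TL k (D.longScale k * g)⁆ ∈ P := by
  have hij_ne := Idx.ne_of_fst_ne hij
  rcases eq_or_ne j k with rfl | hjk
  · exact commutator_TS_TL_mem_of_adjacent hP hij ha hg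
  rcases eq_or_ne (Idx.neg i) k with rfl | hik
  · rw [D.TS_eq_TS_neg hij_ne]
    exact commutator_TS_TL_mem_of_adjacent (i := Idx.neg j) (j := Idx.neg i) hP hij.symm
      (neg_mem (FI.twist_mem i j ha)) hg
  · rw [D.commutator_TS_TL_eq_one hij_ne hjk (Idx.neg_eq_iff.not.1 hik)]
    exact one_mem P

theorem exists_add_eq_one (hcom : FI.I ⊔ FJ.I = ⊤) : ∃ u ∈ FI.I, ∃ v ∈ FJ.I, u + v = 1 :=
  AddSubgroup.mem_sup.1 (hcom ▸ AddSubgroup.mem_top 1)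

theorem transv_subset_normalizer (hPn : D.EUmax n ≤ Subgroup.normalizer (P : Set (GLn A n)))
    (F : FormIdeal D) : F.transv n ⊆ Subgroup.normalizer (P : Set (GLn A n)) :=
  (F.transv_subset_EUmax n).trans hPn

/-- Comaximality enters through `a = a * u + a * v`: modulo `P`, `T_{ij}(a)` is `T_{ij}(a * u)`,
a commutator of `T_{ik}(a)` and `T_{kj}(u)`, neither of which is opposite to `T_{ji}(b)`. -/
theorem commutator_TS_TS_mem_of_opposite (hn : 3 ≤ n) (hcom : FI.I ⊔ FJ.I = ⊤)
    (hPn : D.EUmax n ≤ Subgroup.normalizer (P : Set (GLn A n)))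
    (hP : (FI.symmProd FJ).transv n ⊆ P) (hij : i.1 ≠ j.1) (ha : a ∈ FI.I) (hb : b ∈ FJ.I) :
    ⁅D.TS i j a, D.TS j i b⁆ ∈ P := by
  obtain ⟨u, hu, v, hv, huv⟩ := exists_add_eq_one hcom
  obtain ⟨k, hki, hkj⟩ := Idx.exists_fst_ne hn i j
  set C := centralizerMod P (D.TS j i b)
  have hP' : (FJ.symmProd FI).transv n ⊆ P := transv_symmProd_comm FI FJ n ▸ hP
  have ik_mem : D.TS i k a ∈ C :=
    ⟨transv_subset_normalizer hPn FI (TS_mem_transvGen hki.symm ha), commutatorElement_mem_swap.1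
      (commutator_TS_TS_mem_of_ne hP' hij.symm hki.symm (Idx.ne_of_fst_ne hkj.symm) hb ha)⟩
  have kj_mem : D.TS k j u ∈ C :=
    ⟨transv_subset_normalizer hPn FI (TS_mem_transvGen hkj hu),
      commutator_TS_TS_mem_of_ne hP hkj hij.symm (Idx.ne_of_fst_ne hki) hu hb⟩
  have mul_u_mem : a * u ∈ D.shortLevel C i j := by
    rw [mem_shortLevel, ← D.commutator_TS_TS hki.symm hkj hij]
    exact mul_mem (mul_mem (mul_mem ik_mem kj_mem) (inv_mem ik_mem)) (inv_mem kj_mem)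
  have mul_v_mem : a * v ∈ D.shortLevel C i j :=
    le_centralizerMod (transv_subset_normalizer hPn FJ (TS_mem_transvGen hij.symm hb))
      (hP (TS_mem_transvGen hij (mul_mem_symI ha hv)))
  have mem : a ∈ D.shortLevel C i j := by
    simpa only [← mul_add, huv, mul_one] using add_mem mul_u_mem mul_v_mem
  exact mem.2

theorem commutator_TS_TS_mem_of_adjacent (hn : 3 ≤ n) (hcom : FI.I ⊔ FJ.I = ⊤)
    (hPn : D.EUmax n ≤ Subgroup.normalizer (P : Set (GLn A n)))
    (hP : (FI.symmProd FJ).transv n ⊆ P) (hij : i.1 ≠ j.1) (hjl : j.1 ≠ l.1) (ha : a ∈ FI.I)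
    (hb : b ∈ FJ.I) : ⁅D.TS i j a, D.TS j l b⁆ ∈ P := by
  rcases eq_or_ne i l with rfl | hil
  · exact commutator_TS_TS_mem_of_opposite hn hcom hPn hP hij ha hb
  · exact commutator_TS_TS_mem_of_ne hP hij hjl hil ha hb

theorem commutator_TS_TS_mem (hn : 3 ≤ n) (hcom : FI.I ⊔ FJ.I = ⊤)
    (hPn : D.EUmax n ≤ Subgroup.normalizer (P : Set (GLn A n)))
    (hP : (FI.symmProd FJ).transv n ⊆ P) (hij : i.1 ≠ j.1) (hkl : k.1 ≠ l.1) (ha : a ∈ FI.I)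
    (hb : b ∈ FJ.I) : ⁅D.TS i j a, D.TS k l b⁆ ∈ P := by
  have hij_ne := Idx.ne_of_fst_ne hij
  have hkl_ne := Idx.ne_of_fst_ne hkl
  have ha' := neg_mem (FI.twist_mem i j ha)
  have hb' := neg_mem (FJ.twist_mem k l hb)
  rcases eq_or_ne j k with rfl | hjk
  · exact commutator_TS_TS_mem_of_adjacent hn hcom hPn hP hij hkl ha hb
  rcases eq_or_ne j (Idx.neg l) with rfl | hjl
  · rw [D.TS_eq_TS_neg hkl_ne]
    exact commutator_TS_TS_mem_of_adjacent (l := Idx.neg k) hn hcom hPn hP hij hkl.symm ha hb'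
  rcases eq_or_ne i (Idx.neg k) with rfl | hik
  · rw [D.TS_eq_TS_neg hij_ne, Idx.neg_neg]
    exact commutator_TS_TS_mem_of_adjacent (i := Idx.neg j) hn hcom hPn hP hij.symm hkl ha' hb
  rcases eq_or_ne i l with rfl | hil
  · rw [D.TS_eq_TS_neg hij_ne, D.TS_eq_TS_neg hkl_ne]
    exact commutator_TS_TS_mem_of_adjacent (i := Idx.neg j) (j := Idx.neg i) (l := Idx.neg k)
      hn hcom hPn hP hij.symm hkl.symm ha' hb'
  · rw [D.commutator_TS_TS_eq_one hij_ne hkl_ne hjk hjl hik hil]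
    exact one_mem P

theorem commutator_TL_TL_mem_of_opposite (hn : 3 ≤ n) (hcom : FI.I ⊔ FJ.I = ⊤)
    (hPn : D.EUmax n ≤ Subgroup.normalizer (P : Set (GLn A n)))
    (hP : (FI.symmProd FJ).transv n ⊆ P) (i : Idx n) {g h : A} (hg : g ∈ FI.Gamma)
    (hh : h ∈ FJ.Gamma) :
    ⁅D.TL i (D.longScale i * g), D.TL (Idx.neg i) (D.longScale (Idx.neg i) * h)⁆ ∈ P := by
  obtain ⟨u, hu, v, hv, huv⟩ := exists_add_eq_one hcom
  obtain ⟨j, hji, -⟩ := Idx.exists_fst_ne hn i i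
  set y := D.TL (Idx.neg i) (D.longScale (Idx.neg i) * h)
  set C := centralizerMod P y
  have P_le : P ≤ C := le_centralizerMod
    (transv_subset_normalizer hPn FJ (TL_mem_transvGen (Idx.neg i) hh))
  have short_mem (k : Idx n) (hik : i.1 ≠ k.1) {c : A} (hc : c ∈ FI.I) : D.TS i k c ∈ C :=
    ⟨transv_subset_normalizer hPn FI (TS_mem_transvGen hik hc),
      commutator_TS_TL_mem hP hik (Idx.neg i) hc hh⟩
  have long_mem : D.TL j (D.longScale j * g) ∈ C := by
    refine ⟨transv_subset_normalizer hPn FI (TL_mem_transvGen j hg), ?_⟩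
    rw [D.commutator_TL_TL_eq_one (Idx.ne_of_fst_ne (j := Idx.neg (Idx.neg i)) hji)]
    exact one_mem P
  have conj_u_mem : u * g * D.bar u ∈ D.longLevel C i := by
    rw [mem_longLevel, ← mul_mem_cancel_left (short_mem (Idx.neg j) hji.symm
      (FI.mul_mem_right (D.longScale j * g) u hu)),
      ← D.commutator_TS_TL hji.symm u (FI.gamma_le_Lambda hg)]
    have hu_mem := short_mem j hji.symm hu
    exact mul_mem (mul_mem (mul_mem hu_mem long_mem) (inv_mem hu_mem)) (inv_mem long_mem)
  have conj_v_mem : v * g * D.bar v ∈ D.longLevel C i :=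
    P_le (hP (TL_mem_transvGen i (conj_mem_symG_left FI FJ hv hg)))
  have cross_mem : u * g * D.bar v - D.lam * D.bar (u * g * D.bar v) ∈ D.longLevel C i :=
    P_le (hP (TL_mem_transvGen i (sub_mem_symG FI FJ
      (mul_mem_symI (FI.mul_mem_right g u hu) (FJ.bar_mem v hv)))))
  have mem : g ∈ D.longLevel C i := by
    rw [eq_conj_add_of_add_eq_one huv (FI.gamma_le_Lambda hg)]
    exact add_mem (add_mem conj_u_mem conj_v_mem) cross_mem
  exact mem.2

theorem commutator_TL_TL_mem (hn : 3 ≤ n) (hcom : FI.I ⊔ FJ.I = ⊤)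
    (hPn : D.EUmax n ≤ Subgroup.normalizer (P : Set (GLn A n)))
    (hP : (FI.symmProd FJ).transv n ⊆ P) (i k : Idx n) {g h : A} (hg : g ∈ FI.Gamma)
    (hh : h ∈ FJ.Gamma) :
    ⁅D.TL i (D.longScale i * g), D.TL k (D.longScale k * h)⁆ ∈ P := by
  rcases eq_or_ne (Idx.neg i) k with rfl | hik
  · exact commutator_TL_TL_mem_of_opposite hn hcom hPn hP i hg hh
  · rw [D.commutator_TL_TL_eq_one (Idx.neg_eq_iff.not.1 hik)]
    exact one_mem P

theorem commutator_transv_mem (hn : 3 ≤ n) (hcom : FI.I ⊔ FJ.I = ⊤)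
    (hPn : D.EUmax n ≤ Subgroup.normalizer (P : Set (GLn A n)))
    (hP : (FI.symmProd FJ).transv n ⊆ P) : ∀ x ∈ FI.transv n, ∀ y ∈ FJ.transv n, ⁅x, y⁆ ∈ P :=
  forall_mem_transvGen.2
    ⟨fun _ _ hij _ ha => forall_mem_transvGen.2
      ⟨fun _ _ hkl _ hb => commutator_TS_TS_mem hn hcom hPn hP hij hkl ha hb,
        fun k _ hh => commutator_TS_TL_mem hP hij k ha hh⟩,
      fun i _ hg => forall_mem_transvGen.2
        ⟨fun _ _ hkl _ hb => commutatorElement_mem_swap.1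
          (commutator_TS_TL_mem (transv_symmProd_comm FI FJ n ▸ hP) hkl i hb hg),
          fun k _ hh => commutator_TL_TL_mem hn hcom hPn hP i k hg hh⟩⟩

end UpperBound

theorem sup_closure_transv_eq_EUmax (hcom : FI.I ⊔ FJ.I = ⊤) :
    Subgroup.closure (FI.transv n) ⊔ Subgroup.closure (FJ.transv n) = D.EUmax n := by
  obtain ⟨u, hu, v, hv, huv⟩ := exists_add_eq_one hcom
  set S := Subgroup.closure (FI.transv n) ⊔ Subgroup.closure (FJ.transv n)
  have FI_subset : FI.transv n ⊆ S := fun _ hx =>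
    Subgroup.mem_sup_left (Subgroup.subset_closure hx)
  have FJ_subset : FJ.transv n ⊆ S := fun _ hx =>
    Subgroup.mem_sup_right (Subgroup.subset_closure hx)
  rw [transvGen_subset_iff] at FI_subset FJ_subset
  refine le_antisymm (sup_le ((Subgroup.closure_le _).2 (transv_subset_EUmax FI n))
    ((Subgroup.closure_le _).2 (transv_subset_EUmax FJ n))) ((Subgroup.closure_le _).2
    (transvGen_subset_iff.2 ⟨fun i j hij c _ => ?_, fun i g hg => ?_⟩))
  · rw [← one_mul c, ← huv, add_mul]
    exact add_mem (FI_subset.1 i j hij (FI.mul_mem_right c u hu))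
      (FJ_subset.1 i j hij (FJ.mul_mem_right c v hv))
  · rw [eq_conj_add_of_add_eq_one huv hg]
    exact add_mem (add_mem (FI_subset.2 i (FI.conj_mem_Gamma hu hg))
      (FJ_subset.2 i (FJ.conj_mem_Gamma hv hg)))
      (FI_subset.2 i (FI.sub_mem_Gamma (FI.mul_mem_right _ _ (FI.mul_mem_right g u hu))))

theorem commutator_EU_le_iff (hn : 3 ≤ n) (hcom : FI.I ⊔ FJ.I = ⊤)
    (hPn : D.EUmax n ≤ Subgroup.normalizer (P : Set (GLn A n))) :
    ⁅D.EU n FI.I FI.Gamma, D.EU n FJ.I FJ.Gamma⁆ ≤ P ↔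
      D.EUsym n FI.I FI.Gamma FJ.I FJ.Gamma ≤ P :=
  calc ⁅D.EU n FI.I FI.Gamma, D.EU n FJ.I FJ.Gamma⁆ ≤ P
    _ ↔ ∀ x ∈ FI.transv n, ∀ y ∈ FJ.transv n, ⁅x, y⁆ ∈ P :=
      commutator_conjClosure_le_iff (sup_closure_transv_eq_EUmax hcom) hPn
    _ ↔ (FI.symmProd FJ).transv n ⊆ P :=
      ⟨transv_symmProd_subset hn, commutator_transv_mem hn hcom hPn⟩
    _ ↔ D.EUsym n FI.I FI.Gamma FJ.I FJ.Gamma ≤ P := (conjClosure_le_iff hPn).symm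

end FormIdeal

/-- Theorem 8: for comaximal form ideals `I + J = A` the mixed commutator
subgroup `[EU(2n,I,Γ), EU(2n,J,Δ)]` equals `EU(2n,(I,Γ)∘(J,Δ))`. -/
theorem statement5 {A : Type*} [Ring A] (D : FormRingData A) (n : ℕ) (hn : 3 ≤ n)
    (FI FJ : FormIdeal D) (hcom : FI.I ⊔ FJ.I = ⊤) :
    ⁅D.EU n FI.I FI.Gamma, D.EU n FJ.I FJ.Gamma⁆ =
      D.EUsym n FI.I FI.Gamma FJ.I FJ.Gamma := by
  have normalizes (F : FormIdeal D) : D.EUmax n ≤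
      Subgroup.normalizer (D.EU n F.I F.Gamma : Set (GLn A n)) := le_normalizer_conjClosure _ _
  exact le_antisymm
    ((FormIdeal.commutator_EU_le_iff hn hcom (normalizes (FI.symmProd FJ))).2 le_rfl)
    ((FormIdeal.commutator_EU_le_iff hn hcom
      (le_normalizer_commutator (normalizes FI) (normalizes FJ))).1 le_rfl)
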